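/- For every complex number q with 0 < |q| < 1 and every nonzero complex number u, one has ∑_{i,j,k,l ≥ 0} u^{i−j−k} q^{2i²+2j²+2k²+2l²−2ij−2ik−2il+2jk+2jl} / ((q²;q²)_i (q²;q²)_j (q²;q²)_k (q²;q²)_l) = (1/J_2²) · ( (−q²u, −q²/u, q⁴; q⁴)_∞ · (−q⁶u, −q⁶/u, q¹²; q¹²)_∞ + q² · (−u, −q⁴/u, q⁴; q⁴)_∞ · (−q¹²u, −1/u, q¹²; q¹²)_∞ ). -/

import Mathlib

open scoped BigOperators

/-- The infinite q-Pochhammer symbol `(a; q)_∞ = ∏_{k=0}^∞ (1 - a q^k)`. -/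
noncomputable def qPochInf (a q : ℂ) : ℂ := ∏' n : ℕ, (1 - a * q ^ n)

/-- The finite q-Pochhammer symbol `(a; q)_n = ∏_{k=0}^{n-1} (1 - a q^k)`. -/
noncomputable def qPoch (a q : ℂ) (n : ℕ) : ℂ :=
  Finset.prod (Finset.range n) (fun k => 1 - a * q ^ k)

/-- `J_m = (q^m; q^m)_∞`. -/
noncomputable def J (q : ℂ) (m : ℕ) : ℂ := qPochInf (q ^ m) (q ^ m)

/-- `J_{a,m} = (q^a; q^m)_∞ (q^{m-a}; q^m)_∞ (q^m; q^m)_∞`. -/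
noncomputable def Jam (q : ℂ) (a m : ℕ) : ℂ :=
  qPochInf (q ^ a) (q ^ m) * qPochInf (q ^ (m - a)) (q ^ m) * qPochInf (q ^ m) (q ^ m)

/-! Put `x = q²` and read `1 / (x; x)_n` as `0` for `n < 0`. In the coordinates `N = i - j - k`,
`M = l - k`, `k`, `j` the quadruple sum becomes the sum over `(M, N)` of `u^N x^(M² - MN + N²)`
times two Durfee rectangle series `∑_j x^(j(j+n)) / ((x; x)_j (x; x)_(j+n))`, with `n = M` and
`n = k + N`. Each of these equals `1 / (x; x)_∞`, whatever the integer `n`, and their `ℓ¹` norms are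
bounded uniformly in `n`, which makes the rearrangement legitimate. Splitting the remaining theta
series by the parity of `M` diagonalises the form (for `M = 2m` and `N = m + n` it is `3m² + n²`),
and the Jacobi triple product evaluates each half.

The Durfee sums are constant in `n ≥ 0` because a three-term recurrence makes the norm of their
consecutive differences nondecreasing, while these differences tend to `0`. The triple product
follows from the same evaluation: multiply Euler's series for `(-qz; q²)_∞` and `(-q/z; q²)_∞` and
sum along the diagonals. -/

open Filter Topology

section Summation

lemma summable_pow_mul_pow_sq {𝕜 : Type*} [NormedField 𝕜] [CompleteSpace 𝕜] (a : 𝕜) {r : 𝕜}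
    (hr : ‖r‖ < 1) : Summable fun n : ℕ ↦ a ^ n * r ^ n ^ 2 := by
  have small : ∀ᶠ n : ℕ in atTop, ‖a * r ^ n‖ < 1 / 2 := by
    have h := ((tendsto_pow_atTop_nhds_zero_of_norm_lt_one hr).const_mul a).norm
    rw [mul_zero, norm_zero] at h
    exact h.eventually_lt_const (by norm_num)
  refine Summable.of_norm_bounded_eventually_nat summable_geometric_two ?_
  filter_upwards [small] with n hn
  calc ‖a ^ n * r ^ n ^ 2‖ = ‖a * r ^ n‖ ^ n := by rw [← norm_pow, mul_pow, ← pow_mul, sq]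
    _ ≤ (1 / 2) ^ n := by gcongr

lemma summable_zpow_mul_zpow_sq {𝕜 : Type*} [NormedField 𝕜] [CompleteSpace 𝕜] (a : 𝕜) {r : 𝕜}
    (hr : ‖r‖ < 1) : Summable fun n : ℤ ↦ a ^ n * r ^ n ^ 2 := by
  refine Summable.of_nat_of_neg ((summable_pow_mul_pow_sq a hr).congr fun n ↦ ?_)
    ((summable_pow_mul_pow_sq a⁻¹ hr).congr fun n ↦ ?_)
  · norm_cast
  · rw [neg_sq, zpow_neg, ← inv_zpow]
    norm_cast

lemma hasSum_prod_mul_of_tsum_norm_le {ι κ R : Type*} [NormedRing R] [CompleteSpace R]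
    {g : ι → R} {h : ι → κ → R} {a b : R} {K : ℝ} (hga : HasSum g a)
    (hg : Summable fun i ↦ ‖g i‖) (hh : ∀ i, Summable fun k ↦ ‖h i k‖)
    (hK : ∀ i, ∑' k, ‖h i k‖ ≤ K) (hb : ∀ i, HasSum (h i) b) :
    HasSum (fun p : ι × κ ↦ g p.1 * h p.1 p.2) (a * b) := by
  have majorant : Summable fun p : ι × κ ↦ ‖g p.1‖ * ‖h p.1 p.2‖ := by
    have nonneg : 0 ≤ fun p : ι × κ ↦ ‖g p.1‖ * ‖h p.1 p.2‖ := fun p ↦ by positivity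
    refine (summable_prod_of_nonneg nonneg).2 ⟨fun i ↦ (hh i).mul_left ‖g i‖, ?_⟩
    simp only [tsum_mul_left]
    exact Summable.of_nonneg_of_le
      (fun i ↦ mul_nonneg (norm_nonneg _) (tsum_nonneg fun k ↦ norm_nonneg _))
      (fun i ↦ mul_le_mul_of_nonneg_left (hK i) (norm_nonneg _)) (hg.mul_right K)
  have summable : Summable fun p : ι × κ ↦ g p.1 * h p.1 p.2 :=
    majorant.of_norm_bounded fun p ↦ norm_mul_le _ _
  rw [← (summable.hasSum.prod_fiberwise fun i ↦ (hb i).mul_left (g i)).unique (hga.mul_right b)]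
  exact summable.hasSum

lemma hasSum_prod_mul_of_summable_norm {ι κ R : Type*} [NormedRing R] [CompleteSpace R]
    {g : ι → R} {h : κ → R} {a b : R} (hga : HasSum g a) (hhb : HasSum h b)
    (hg : Summable fun i ↦ ‖g i‖) (hh : Summable fun k ↦ ‖h k‖) :
    HasSum (fun p : ι × κ ↦ g p.1 * h p.2) (a * b) :=
  hga.mul hhb (summable_mul_of_summable_norm hg hh)

lemma hasSum_int_prod_of_even_of_odd {β M : Type*} [AddCommMonoid M] [TopologicalSpace M]
    [ContinuousAdd M] {f : ℤ × β → M} {a b : M}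
    (he : HasSum (fun p : ℤ × β ↦ f (2 * p.1, p.2)) a)
    (ho : HasSum (fun p : ℤ × β ↦ f (2 * p.1 + 1, p.2)) b) : HasSum f (a + b) := by
  let even : ℤ × β → ℤ × β := fun p ↦ (2 * p.1, p.2)
  let odd : ℤ × β → ℤ × β := fun p ↦ (2 * p.1 + 1, p.2)
  have even_inj : even.Injective := by
    rintro ⟨m, s⟩ ⟨n, t⟩ h
    simp only [even, Prod.mk.injEq] at h ⊢
    exact ⟨by lia, h.2⟩
  have odd_inj : odd.Injective := by
    rintro ⟨m, s⟩ ⟨n, t⟩ h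
    simp only [odd, Prod.mk.injEq] at h ⊢
    exact ⟨by lia, h.2⟩
  have even_compl_odd : IsCompl (Set.range even) (Set.range odd) := by
    refine ⟨Set.disjoint_left.2 ?_, codisjoint_iff_le_sup.2 ?_⟩
    · rintro _ ⟨p, rfl⟩ ⟨p', h⟩
      have := congrArg Prod.fst h
      simp only [even, odd] at this
      lia
    · rintro ⟨n, t⟩ -
      rcases Int.even_or_odd' n with ⟨m, rfl | rfl⟩
      exacts [Or.inl ⟨(m, t), rfl⟩, Or.inr ⟨(m, t), rfl⟩]
  exact (even_inj.hasSum_range_iff.2 he).add_isCompl even_compl_odd (odd_inj.hasSum_range_iff.2 ho)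

end Summation

section QPochhammer

variable {x : ℂ}

lemma qPoch_succ (a x : ℂ) (n : ℕ) : qPoch a x (n + 1) = qPoch a x n * (1 - a * x ^ n) :=
  Finset.prod_range_succ _ _

lemma summable_norm_neg_mul_pow (a : ℂ) (hx : ‖x‖ < 1) : Summable fun n : ℕ ↦ ‖-(a * x ^ n)‖ := by
  simp only [norm_neg, norm_mul, norm_pow]
  exact (summable_geometric_of_lt_one (norm_nonneg _) hx).mul_left _

lemma tendsto_qPoch (a : ℂ) (hx : ‖x‖ < 1) :
    Tendsto (qPoch a x) atTop (𝓝 (qPochInf a x)) := by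
  have h := (multipliable_one_add_of_summable
    (summable_norm_neg_mul_pow a hx)).tendsto_prod_tprod_nat
  simp only [← sub_eq_add_neg] at h
  exact h

lemma one_sub_mul_pow_ne_zero (hx : ‖x‖ < 1) (n : ℕ) : 1 - x * x ^ n ≠ 0 := by
  intro h
  have hlt : ‖x ^ (n + 1)‖ < 1 := by
    rw [norm_pow]
    exact pow_lt_one₀ (norm_nonneg _) hx n.succ_ne_zero
  rw [pow_succ', ← sub_eq_zero.1 h, norm_one] at hlt
  exact lt_irrefl _ hlt

lemma qPoch_self_ne_zero (hx : ‖x‖ < 1) (n : ℕ) : qPoch x x n ≠ 0 :=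
  Finset.prod_ne_zero_iff.2 fun k _ ↦ one_sub_mul_pow_ne_zero hx k

lemma qPochInf_self_ne_zero (hx : ‖x‖ < 1) : qPochInf x x ≠ 0 := by
  have h := tprod_one_add_ne_zero_of_summable (f := fun n : ℕ ↦ -(x * x ^ n))
    (fun n ↦ by simpa only [← sub_eq_add_neg] using one_sub_mul_pow_ne_zero hx n)
    (summable_norm_neg_mul_pow x hx)
  simp only [← sub_eq_add_neg] at h
  exact h

/-- The reciprocal `1 / (x; x)_n`, extended by `0` to negative `n`. With this convention the
recurrence `one_sub_zpow_mul_invQPoch` holds for every integer, so that sums over `n ≥ 0` may be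
taken over `ℤ` and shifted freely. -/
noncomputable def invQPoch (x : ℂ) : ℤ → ℂ
  | Int.ofNat n => (qPoch x x n)⁻¹
  | Int.negSucc _ => 0

lemma invQPoch_natCast (x : ℂ) (n : ℕ) : invQPoch x n = (qPoch x x n)⁻¹ := rfl

lemma invQPoch_of_neg (x : ℂ) {n : ℤ} (hn : n < 0) : invQPoch x n = 0 := by
  obtain ⟨m, rfl⟩ := Int.eq_negSucc_of_lt_zero hn
  rfl

lemma invQPoch_zero (x : ℂ) : invQPoch x 0 = 1 := by
  simpa [qPoch] using invQPoch_natCast x 0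

lemma one_sub_zpow_mul_invQPoch (hx : ‖x‖ < 1) (n : ℤ) :
    (1 - x ^ n) * invQPoch x n = invQPoch x (n - 1) := by
  rcases lt_trichotomy n 0 with hn | rfl | hn
  · rw [invQPoch_of_neg x hn, invQPoch_of_neg x (by lia : n - 1 < 0), mul_zero]
  · rw [invQPoch_of_neg x (by norm_num : (0 : ℤ) - 1 < 0), zpow_zero, sub_self, zero_mul]
  · obtain ⟨m, rfl⟩ : ∃ m : ℕ, n = (m + 1 : ℕ) := ⟨(n - 1).toNat, by lia⟩
    rw [Nat.cast_succ, add_sub_cancel_right, ← Nat.cast_succ, invQPoch_natCast, invQPoch_natCast,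
      zpow_natCast, qPoch_succ, pow_succ', mul_inv, mul_left_comm,
      mul_inv_cancel₀ (one_sub_mul_pow_ne_zero hx m), mul_one]

lemma tendsto_invQPoch_natCast (hx : ‖x‖ < 1) :
    Tendsto (fun n : ℕ ↦ invQPoch x n) atTop (𝓝 (qPochInf x x)⁻¹) :=
  (tendsto_qPoch x hx).inv₀ (qPochInf_self_ne_zero hx)

lemma exists_norm_invQPoch_le (hx : ‖x‖ < 1) : ∃ C, ∀ n, ‖invQPoch x n‖ ≤ C := by
  obtain ⟨C, hC⟩ := (tendsto_invQPoch_natCast hx).norm.bddAbove_range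
  refine ⟨C, fun n ↦ ?_⟩
  rcases lt_or_ge n 0 with hn | hn
  · rw [invQPoch_of_neg x hn, norm_zero]
    exact (norm_nonneg _).trans (hC ⟨0, rfl⟩)
  · lift n to ℕ using hn
    exact hC ⟨n, rfl⟩

end QPochhammer

section Durfee

variable {x : ℂ}

/-- The general term `x^(j(j+n)) / ((x; x)_j (x; x)_(j+n))` of the Durfee rectangle series, for
integers `n` and `j`; it vanishes unless `j` and `j + n` are both nonnegative. -/
noncomputable def durfeeTerm (x : ℂ) (n j : ℤ) : ℂ :=
  x ^ (j * (j + n)) * invQPoch x j * invQPoch x (j + n)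

lemma durfeeTerm_neg (x : ℂ) (n j : ℤ) : durfeeTerm x (-n) j = durfeeTerm x n (j - n) := by
  simp only [durfeeTerm, sub_add_cancel, ← sub_eq_add_neg, mul_comm j (j - n)]
  ring

lemma norm_durfeeTerm_natCast_le (hx : ‖x‖ < 1) {C : ℝ} (hC : ∀ n, ‖invQPoch x n‖ ≤ C) (n : ℕ)
    (j : ℤ) : ‖durfeeTerm x n j‖ ≤ C ^ 2 * ‖x‖ ^ j ^ 2 := by
  rcases lt_or_ge j 0 with hj | hj
  · rw [durfeeTerm, invQPoch_of_neg x hj, mul_zero, zero_mul, norm_zero]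
    positivity
  · lift j to ℕ using hj
    have hC₀ : 0 ≤ C := (norm_nonneg _).trans (hC 0)
    have hpow : ‖x‖ ^ ((j : ℤ) * (j + n)) ≤ ‖x‖ ^ (j : ℤ) ^ 2 := by
      norm_cast
      exact pow_le_pow_of_le_one (norm_nonneg x) hx.le (by nlinarith)
    calc ‖durfeeTerm x n j‖
        = ‖x‖ ^ ((j : ℤ) * (j + n)) * ‖invQPoch x j‖ * ‖invQPoch x (j + n)‖ := by
          rw [durfeeTerm, norm_mul, norm_mul, norm_zpow]
      _ ≤ ‖x‖ ^ (j : ℤ) ^ 2 * C * C := by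
          gcongr
          exacts [hC _, hC _]
      _ = C ^ 2 * ‖x‖ ^ (j : ℤ) ^ 2 := by ring

lemma summable_norm_zpow_sq (hx : ‖x‖ < 1) : Summable fun j : ℤ ↦ ‖x‖ ^ j ^ 2 := by
  simpa using summable_zpow_mul_zpow_sq (1 : ℝ) (r := ‖x‖) (by rwa [norm_norm])

lemma summable_durfeeTerm_natCast (hx : ‖x‖ < 1) (n : ℕ) : Summable (durfeeTerm x n) := by
  obtain ⟨C, hC⟩ := exists_norm_invQPoch_le hx
  exact ((summable_norm_zpow_sq hx).mul_left _).of_norm_bounded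
    (norm_durfeeTerm_natCast_le hx hC n)

lemma exists_tsum_norm_durfeeTerm_le (hx : ‖x‖ < 1) :
    ∃ K, ∀ n : ℤ, ∑' j, ‖durfeeTerm x n j‖ ≤ K := by
  obtain ⟨C, hC⟩ := exists_norm_invQPoch_le hx
  have bound (n : ℕ) : ∑' j, ‖durfeeTerm x n j‖ ≤ ∑' j : ℤ, C ^ 2 * ‖x‖ ^ j ^ 2 :=
    (summable_durfeeTerm_natCast hx n).norm.tsum_le_tsum (norm_durfeeTerm_natCast_le hx hC n)
      ((summable_norm_zpow_sq hx).mul_left _)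
  refine ⟨∑' j : ℤ, C ^ 2 * ‖x‖ ^ j ^ 2, fun n ↦ ?_⟩
  rcases Int.eq_nat_or_neg n with ⟨n, rfl | rfl⟩
  · exact bound n
  · simp only [durfeeTerm_neg]
    exact ((Equiv.subRight (n : ℤ)).tsum_eq fun j ↦ ‖durfeeTerm x n j‖).trans_le (bound n)

lemma durfeeTerm_recurrence (hx₀ : x ≠ 0) (hx : ‖x‖ < 1) (n j : ℤ) :
    durfeeTerm x n j - (1 - x ^ (n + 1)) * durfeeTerm x (n + 1) j =
      x ^ (n + 1) * durfeeTerm x (n + 2) (j - 1) := by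
  have shift₁ : x ^ (j * (j + (n + 1))) = x ^ (j * (j + n)) * x ^ j := by
    rw [← zpow_add₀ hx₀]
    ring_nf
  have shift₂ : x ^ (n + 1) * x ^ ((j - 1) * (j + (n + 1))) = x ^ (j * (j + n)) := by
    rw [← zpow_add₀ hx₀]
    ring_nf
  have shift₃ : x ^ (j + (n + 1)) = x ^ j * x ^ (n + 1) := zpow_add₀ hx₀ _ _
  have lower₁ := one_sub_zpow_mul_invQPoch hx j
  have lower₂ := one_sub_zpow_mul_invQPoch hx (j + (n + 1))
  rw [show j + (n + 1) - 1 = j + n by ring, shift₃] at lower₂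
  rw [durfeeTerm, durfeeTerm, durfeeTerm, show j - 1 + (n + 2) = j + (n + 1) by ring, ← lower₁,
    ← lower₂, shift₁, ← shift₂]
  ring

lemma tsum_durfeeTerm_sub_tsum_succ (hx₀ : x ≠ 0) (hx : ‖x‖ < 1) (n : ℕ) :
    ∑' j, durfeeTerm x n j - ∑' j, durfeeTerm x (n + 1 : ℕ) j =
      -x ^ (n + 1) *
        (∑' j, durfeeTerm x (n + 1 : ℕ) j - ∑' j, durfeeTerm x (n + 2 : ℕ) j) := by
  have hn := summable_durfeeTerm_natCast hx n
  have hn₁ := (summable_durfeeTerm_natCast hx (n + 1)).mul_left (1 - x ^ (n + 1))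
  have summed : ∑' j, durfeeTerm x n j - (1 - x ^ (n + 1)) * ∑' j, durfeeTerm x (n + 1 : ℕ) j =
      x ^ (n + 1) * ∑' j, durfeeTerm x (n + 2 : ℕ) j := by
    rw [← tsum_mul_left, ← hn.tsum_sub hn₁,
      ← (Equiv.subRight (1 : ℤ)).tsum_eq (durfeeTerm x (n + 2 : ℕ)), ← tsum_mul_left]
    exact tsum_congr fun j ↦ mod_cast durfeeTerm_recurrence hx₀ hx n j
  linear_combination summed

lemma tendsto_durfeeTerm_natCast (hx : ‖x‖ < 1) (j : ℤ) :
    Tendsto (fun n : ℕ ↦ durfeeTerm x n j) atTop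
      (𝓝 (if j = 0 then (qPochInf x x)⁻¹ else 0)) := by
  rcases lt_trichotomy j 0 with hj | rfl | hj
  · simp [durfeeTerm, invQPoch_of_neg x hj, hj.ne]
  · simpa [durfeeTerm, invQPoch_zero] using tendsto_invQPoch_natCast hx
  · rw [if_neg hj.ne']
    lift j to ℕ using hj.le
    have hpow : Tendsto (fun n : ℕ ↦ (x ^ j) ^ n) atTop (𝓝 0) := by
      refine tendsto_pow_atTop_nhds_zero_of_norm_lt_one ?_
      rw [norm_pow]
      exact pow_lt_one₀ (norm_nonneg _) hx (by lia)
    have hinv : Tendsto (fun n : ℕ ↦ invQPoch x (j + n)) atTop (𝓝 (qPochInf x x)⁻¹) := by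
      simpa [Function.comp_def, add_comm] using
        (tendsto_invQPoch_natCast hx).comp (tendsto_add_atTop_nat j)
    have h := ((hpow.const_mul (x ^ (j * j))).mul_const (invQPoch x j)).mul hinv
    simp only [mul_zero, zero_mul] at h
    refine h.congr fun n ↦ ?_
    rw [durfeeTerm, ← pow_mul, ← pow_add, ← mul_add]
    norm_cast

lemma tendsto_tsum_durfeeTerm_natCast (hx : ‖x‖ < 1) :
    Tendsto (fun n : ℕ ↦ ∑' j, durfeeTerm x n j) atTop (𝓝 (qPochInf x x)⁻¹) := by
  obtain ⟨C, hC⟩ := exists_norm_invQPoch_le hx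
  simpa only [tsum_ite_eq] using tendsto_tsum_of_dominated_convergence
    ((summable_norm_zpow_sq hx).mul_left (C ^ 2)) (tendsto_durfeeTerm_natCast hx)
    (Eventually.of_forall (norm_durfeeTerm_natCast_le hx hC))

lemma tsum_durfeeTerm_natCast (hx₀ : x ≠ 0) (hx : ‖x‖ < 1) (n : ℕ) :
    ∑' j, durfeeTerm x n j = (qPochInf x x)⁻¹ := by
  set F : ℕ → ℂ := fun n ↦ ∑' j, durfeeTerm x n j
  have hF : Tendsto F atTop (𝓝 (qPochInf x x)⁻¹) := tendsto_tsum_durfeeTerm_natCast hx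
  have diff_mono : Monotone fun n ↦ ‖F n - F (n + 1)‖ := by
    refine monotone_nat_of_le_succ fun n ↦ ?_
    rw [show F n - F (n + 1) = -x ^ (n + 1) * (F (n + 1) - F (n + 2)) from
      tsum_durfeeTerm_sub_tsum_succ hx₀ hx n, norm_mul, norm_neg, norm_pow]
    exact mul_le_of_le_one_left (norm_nonneg _) (pow_le_one₀ (norm_nonneg _) hx.le)
  have diff_tendsto : Tendsto (fun n ↦ ‖F n - F (n + 1)‖) atTop (𝓝 0) := by
    simpa using (hF.sub (hF.comp (tendsto_add_atTop_nat 1))).norm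
  have succ_eq (n : ℕ) : F (n + 1) = F n :=
    (sub_eq_zero.1 (norm_le_zero_iff.1 (diff_mono.ge_of_tendsto diff_tendsto n))).symm
  have const (m : ℕ) : F (m + n) = F n := by
    induction m with
    | zero => rw [zero_add]
    | succ m ih => rw [add_right_comm, succ_eq, ih]
  exact tendsto_nhds_unique tendsto_const_nhds
    ((hF.comp (tendsto_add_atTop_nat n)).congr const)

theorem hasSum_durfeeTerm (hx₀ : x ≠ 0) (hx : ‖x‖ < 1) (n : ℤ) :
    HasSum (durfeeTerm x n) (qPochInf x x)⁻¹ := by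
  have hasSum_natCast (n : ℕ) : HasSum (durfeeTerm x n) (qPochInf x x)⁻¹ :=
    tsum_durfeeTerm_natCast hx₀ hx n ▸ (summable_durfeeTerm_natCast hx n).hasSum
  rcases Int.eq_nat_or_neg n with ⟨n, rfl | rfl⟩
  · exact hasSum_natCast n
  · rw [funext (durfeeTerm_neg x n)]
    exact (Equiv.hasSum_iff (f := durfeeTerm x n) (Equiv.subRight (n : ℤ))).2 (hasSum_natCast n)

end Durfee

section JacobiTripleProduct

variable {q : ℂ}

lemma norm_sq_lt_one (hq : ‖q‖ < 1) : ‖q ^ 2‖ < 1 := by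
  rw [norm_pow]
  exact pow_lt_one₀ (norm_nonneg _) hq two_ne_zero

/-- The general term `z^n q^(n²) / (q²; q²)_n` of Euler's series for `(-qz; q²)_∞`. -/
noncomputable def eulerTerm (q z : ℂ) (n : ℕ) : ℂ :=
  z ^ n * q ^ n ^ 2 * (qPoch (q ^ 2) (q ^ 2) n)⁻¹

lemma exists_norm_eulerTerm_le (hq : ‖q‖ < 1) :
    ∃ C, ∀ (z : ℂ) (n : ℕ), ‖eulerTerm q z n‖ ≤ ‖z‖ ^ n * ‖q‖ ^ n ^ 2 * C := by
  obtain ⟨C, hC⟩ := exists_norm_invQPoch_le (norm_sq_lt_one hq)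
  refine ⟨C, fun z n ↦ ?_⟩
  rw [eulerTerm, norm_mul, norm_mul, norm_pow, norm_pow]
  gcongr
  exact hC n

lemma summable_norm_pow_mul_norm_pow_sq (z : ℂ) (hq : ‖q‖ < 1) :
    Summable fun n : ℕ ↦ ‖z‖ ^ n * ‖q‖ ^ n ^ 2 :=
  summable_pow_mul_pow_sq ‖z‖ (by rwa [norm_norm])

lemma summable_eulerTerm (z : ℂ) (hq : ‖q‖ < 1) : Summable (eulerTerm q z) := by
  obtain ⟨C, hC⟩ := exists_norm_eulerTerm_le hq
  exact ((summable_norm_pow_mul_norm_pow_sq z hq).mul_right C).of_norm_bounded (hC z)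

lemma eulerTerm_succ_sub (z : ℂ) (hq : ‖q‖ < 1) (n : ℕ) :
    eulerTerm q z (n + 1) - eulerTerm q (z * q ^ 2) (n + 1) =
      q * z * eulerTerm q (z * q ^ 2) n := by
  have hfactor := one_sub_mul_pow_ne_zero (norm_sq_lt_one hq) n
  have hpoch := qPoch_self_ne_zero (norm_sq_lt_one hq) n
  simp only [eulerTerm, qPoch_succ]
  field_simp
  ring

lemma tsum_eulerTerm_eq_mul (z : ℂ) (hq : ‖q‖ < 1) :
    ∑' n, eulerTerm q z n = (1 + q * z) * ∑' n, eulerTerm q (z * q ^ 2) n := by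
  have hz := summable_eulerTerm z hq
  have hz' := summable_eulerTerm (z * q ^ 2) hq
  have difference : ∑' n, eulerTerm q z n - ∑' n, eulerTerm q (z * q ^ 2) n =
      q * z * ∑' n, eulerTerm q (z * q ^ 2) n := by
    rw [← hz.tsum_sub hz', (hz.sub hz').tsum_eq_zero_add, ← tsum_mul_left]
    simp only [eulerTerm_succ_sub z hq]
    simp [eulerTerm]
  linear_combination difference

lemma tsum_eulerTerm_eq_qPoch_mul (z : ℂ) (hq : ‖q‖ < 1) (m : ℕ) :
    ∑' n, eulerTerm q z n =
      qPoch (-(q * z)) (q ^ 2) m * ∑' n, eulerTerm q (z * (q ^ 2) ^ m) n := by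
  induction m with
  | zero => simp [qPoch]
  | succ m ih =>
    rw [ih, tsum_eulerTerm_eq_mul _ hq, qPoch_succ, pow_succ (q ^ 2) m, ← mul_assoc z]
    ring

lemma tendsto_tsum_eulerTerm_mul_pow (z : ℂ) (hq : ‖q‖ < 1) :
    Tendsto (fun m : ℕ ↦ ∑' n, eulerTerm q (z * (q ^ 2) ^ m) n) atTop (𝓝 1) := by
  obtain ⟨C, hC⟩ := exists_norm_eulerTerm_le hq
  have hq2 := norm_sq_lt_one hq
  have hC₀ : 0 ≤ C := by simpa [eulerTerm, qPoch] using (norm_nonneg _).trans (hC 0 0)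
  have argument : Tendsto (fun m : ℕ ↦ z * (q ^ 2) ^ m) atTop (𝓝 0) := by
    simpa using (tendsto_pow_atTop_nhds_zero_of_norm_lt_one hq2).const_mul z
  have termwise (n : ℕ) :
      Tendsto (fun m : ℕ ↦ eulerTerm q (z * (q ^ 2) ^ m) n) atTop (𝓝 (eulerTerm q 0 n)) :=
    ((argument.pow n).mul_const _).mul_const _
  have bound (m n : ℕ) :
      ‖eulerTerm q (z * (q ^ 2) ^ m) n‖ ≤ ‖z‖ ^ n * ‖q‖ ^ n ^ 2 * C := by
    refine (hC _ n).trans ?_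
    gcongr
    rw [norm_mul, norm_pow]
    exact mul_le_of_le_one_right (norm_nonneg _) (pow_le_one₀ (norm_nonneg _) hq2.le)
  have value_zero : ∑' n, eulerTerm q 0 n = 1 := by
    rw [tsum_eq_single 0 fun n hn ↦ by simp [eulerTerm, hn]]
    simp [eulerTerm, qPoch]
  rw [← value_zero]
  exact tendsto_tsum_of_dominated_convergence
    ((summable_norm_pow_mul_norm_pow_sq z hq).mul_right C) termwise (Eventually.of_forall bound)

theorem hasSum_eulerTerm (z : ℂ) (hq : ‖q‖ < 1) :
    HasSum (eulerTerm q z) (qPochInf (-(q * z)) (q ^ 2)) := by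
  have h := (tendsto_qPoch (-(q * z)) (norm_sq_lt_one hq)).mul (tendsto_tsum_eulerTerm_mul_pow z hq)
  simp only [← tsum_eulerTerm_eq_qPoch_mul z hq, mul_one] at h
  exact tendsto_nhds_unique tendsto_const_nhds h ▸ (summable_eulerTerm z hq).hasSum

lemma hasSum_int_euler (z : ℂ) (hq : ‖q‖ < 1) :
    HasSum (fun n : ℤ ↦ z ^ n * q ^ n ^ 2 * invQPoch (q ^ 2) n)
      (qPochInf (-(q * z)) (q ^ 2)) := by
  refine (Nat.cast_injective.hasSum_iff fun n hn ↦ ?_).1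
    ((hasSum_eulerTerm z hq).congr_fun fun n ↦ ?_)
  · rw [invQPoch_of_neg, mul_zero]
    contrapose! hn
    exact ⟨n.toNat, Int.toNat_of_nonneg hn⟩
  · rw [Function.comp_apply, invQPoch_natCast, eulerTerm]
    norm_cast

/-- The product side `(-qz, -q/z, q²; q²)_∞` of the Jacobi triple product identity. -/
noncomputable def jacobiProduct (q z : ℂ) : ℂ :=
  qPochInf (-(q * z)) (q ^ 2) * qPochInf (-(q / z)) (q ^ 2) * qPochInf (q ^ 2) (q ^ 2)

lemma zpow_mul_zpow_sq_mul_durfeeTerm {z : ℂ} (hq₀ : q ≠ 0) (hz : z ≠ 0) (n j : ℤ) :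
    z ^ n * q ^ n ^ 2 * durfeeTerm (q ^ 2) n j =
      (z⁻¹ ^ j * q ^ j ^ 2 * invQPoch (q ^ 2) j) *
        (z ^ (j + n) * q ^ (j + n) ^ 2 * invQPoch (q ^ 2) (j + n)) := by
  have zpow_z : z⁻¹ ^ j * z ^ (j + n) = z ^ n := by
    rw [inv_zpow', ← zpow_add₀ hz, neg_add_cancel_left]
  have zpow_q : q ^ n ^ 2 * (q ^ 2) ^ (j * (j + n)) = q ^ j ^ 2 * q ^ (j + n) ^ 2 := by
    rw [← zpow_ofNat q 2, ← zpow_mul, ← zpow_add₀ hq₀, ← zpow_add₀ hq₀]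
    ring_nf
  rw [durfeeTerm]
  linear_combination invQPoch (q ^ 2) j * invQPoch (q ^ 2) (j + n) *
    (z ^ n * zpow_q - q ^ j ^ 2 * q ^ (j + n) ^ 2 * zpow_z)

lemma hasSum_zpow_mul_zpow_sq_mul_durfeeTerm {z : ℂ} (hq₀ : q ≠ 0) (hq : ‖q‖ < 1) (hz : z ≠ 0) :
    HasSum (fun p : ℤ × ℤ ↦ z ^ p.1 * q ^ p.1 ^ 2 * durfeeTerm (q ^ 2) p.1 p.2)
      (qPochInf (-(q * z)) (q ^ 2) * qPochInf (-(q / z)) (q ^ 2)) := by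
  have euler := hasSum_int_euler z hq
  have euler_inv := hasSum_int_euler z⁻¹ hq
  have product := hasSum_prod_mul_of_summable_norm euler_inv euler euler_inv.summable.norm
    euler.summable.norm
  let shear : ℤ × ℤ ≃ ℤ × ℤ :=
    { toFun := fun p ↦ (p.2, p.2 + p.1)
      invFun := fun p ↦ (p.2 - p.1, p.1)
      left_inv := fun p ↦ by simp
      right_inv := fun p ↦ by simp }
  rw [div_eq_mul_inv q z, mul_comm (qPochInf _ _)]
  simpa only [Function.comp_def, shear, Equiv.coe_fn_mk,
    zpow_mul_zpow_sq_mul_durfeeTerm hq₀ hz] using shear.hasSum_iff.2 product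

theorem hasSum_jacobiProduct {z : ℂ} (hq₀ : q ≠ 0) (hq : ‖q‖ < 1) (hz : z ≠ 0) :
    HasSum (fun n : ℤ ↦ z ^ n * q ^ n ^ 2) (jacobiProduct q z) := by
  have hx₀ : q ^ 2 ≠ 0 := pow_ne_zero 2 hq₀
  have hx := norm_sq_lt_one hq
  obtain ⟨K, hK⟩ := exists_tsum_norm_durfeeTerm_le hx
  have theta := summable_zpow_mul_zpow_sq z hq
  have fibrewise := hasSum_prod_mul_of_tsum_norm_le theta.hasSum theta.norm
    (fun n ↦ (hasSum_durfeeTerm hx₀ hx n).summable.norm) hK (hasSum_durfeeTerm hx₀ hx)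
  have value := fibrewise.unique (hasSum_zpow_mul_zpow_sq_mul_durfeeTerm hq₀ hq hz)
  rw [← div_eq_mul_inv, div_eq_iff (qPochInf_self_ne_zero hx)] at value
  rw [jacobiProduct, ← value]
  exact theta.hasSum

end JacobiTripleProduct

section HexagonalTheta

/-- The general term of the theta series of the hexagonal form `M² - MN + N²`, weighted by
`u ^ N`, at the lattice point `p = (M, N)`. -/
noncomputable def hexThetaTerm (x u : ℂ) (p : ℤ × ℤ) : ℂ :=
  u ^ p.2 * x ^ (p.1 ^ 2 - p.1 * p.2 + p.2 ^ 2)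

variable {x u : ℂ}

lemma hexThetaTerm_even (hx₀ : x ≠ 0) (hu : u ≠ 0) (m n : ℤ) :
    hexThetaTerm x u (2 * m, m + n) = (u ^ m * (x ^ 3) ^ m ^ 2) * (u ^ n * x ^ n ^ 2) := by
  have zpow_x : x ^ ((2 * m) ^ 2 - 2 * m * (m + n) + (m + n) ^ 2) =
      (x ^ 3) ^ m ^ 2 * x ^ n ^ 2 := by
    rw [← zpow_ofNat x 3, ← zpow_mul, ← zpow_add₀ hx₀]
    ring_nf
  rw [hexThetaTerm, zpow_x, zpow_add₀ hu]
  ring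

lemma hexThetaTerm_odd (hx₀ : x ≠ 0) (hu : u ≠ 0) (m n : ℤ) :
    hexThetaTerm x u (2 * m + 1, m + n) =
      ((x ^ 3 * u) ^ m * (x ^ 3) ^ m ^ 2) * ((u / x) ^ n * x ^ n ^ 2) * x := by
  have zpow_x : x ^ ((2 * m + 1) ^ 2 - (2 * m + 1) * (m + n) + (m + n) ^ 2) =
      (x ^ 3) ^ m * (x ^ 3) ^ m ^ 2 * (x ^ n ^ 2 / x ^ n) * x := by
    rw [← zpow_ofNat x 3, ← zpow_mul, ← zpow_mul, ← zpow_sub₀ hx₀, ← zpow_add₀ hx₀,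
      ← zpow_add₀ hx₀, ← zpow_add_one₀ hx₀]
    ring_nf
  rw [hexThetaTerm, zpow_x, zpow_add₀ hu, mul_zpow, div_zpow]
  ring

theorem hasSum_hexThetaTerm (hx₀ : x ≠ 0) (hx : ‖x‖ < 1) (hu : u ≠ 0) :
    HasSum (hexThetaTerm x u)
      (jacobiProduct (x ^ 3) u * jacobiProduct x u +
        jacobiProduct (x ^ 3) (x ^ 3 * u) * jacobiProduct x (u / x) * x) := by
  have hx3₀ : x ^ 3 ≠ 0 := pow_ne_zero 3 hx₀
  have hx3 : ‖x ^ 3‖ < 1 := by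
    rw [norm_pow]
    exact pow_lt_one₀ (norm_nonneg _) hx three_ne_zero
  have product {v w : ℂ} (hv : v ≠ 0) (hw : w ≠ 0) :=
    hasSum_prod_mul_of_summable_norm (hasSum_jacobiProduct hx3₀ hx3 hv)
      (hasSum_jacobiProduct hx₀ hx hw) (summable_zpow_mul_zpow_sq v hx3).norm
      (summable_zpow_mul_zpow_sq w hx).norm
  let shear : ℤ × ℤ ≃ ℤ × ℤ := Equiv.prodShear (Equiv.refl ℤ) Equiv.addLeft
  refine hasSum_int_prod_of_even_of_odd (shear.hasSum_iff.1 ?_) (shear.hasSum_iff.1 ?_)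
  · simpa only [Function.comp_def, shear, Equiv.prodShear_apply, Equiv.refl_apply,
      Equiv.coe_addLeft, hexThetaTerm_even hx₀ hu] using product hu hu
  · simpa only [Function.comp_def, shear, Equiv.prodShear_apply, Equiv.refl_apply,
      Equiv.coe_addLeft, hexThetaTerm_odd hx₀ hu] using
      (product (mul_ne_zero hx3₀ hu) (div_ne_zero hu hx₀)).mul_right x

end HexagonalTheta

section QuadrupleSeries

variable {x u : ℂ}

/-- The general term of the quadruple series, in the base `x = q²`. -/
noncomputable def quadrupleTerm (x u : ℂ) (p : ℕ × ℕ × ℕ × ℕ) : ℂ :=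
  u ^ ((p.1 : ℤ) - p.2.1 - p.2.2.1) *
    x ^ ((p.1 : ℤ) ^ 2 + p.2.1 ^ 2 + p.2.2.1 ^ 2 + p.2.2.2 ^ 2 - p.1 * p.2.1 - p.1 * p.2.2.1
      - p.1 * p.2.2.2 + p.2.1 * p.2.2.1 + p.2.1 * p.2.2.2) /
    (qPoch x x p.1 * qPoch x x p.2.1 * qPoch x x p.2.2.1 * qPoch x x p.2.2.2)

/-- The coordinates `(M, N, k, j)` with `M = l - k` and `N = i - j - k` in which the quadruple
series splits into a hexagonal theta term and two Durfee terms, nested as a double fibration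
over `(M, N)`. -/
def durfeeCoords (p : ℕ × ℕ × ℕ × ℕ) : ((ℤ × ℤ) × ℤ) × ℤ :=
  (((p.2.2.2 - p.2.2.1, p.1 - p.2.1 - p.2.2.1), p.2.2.1), p.2.1)

lemma durfeeCoords_injective : durfeeCoords.Injective := by
  rintro ⟨i, j, k, l⟩ ⟨i', j', k', l'⟩ h
  simp only [durfeeCoords, Prod.mk.injEq] at h ⊢
  lia

lemma durfeeTerm_mul_durfeeTerm_of_notMem_range {M N k j : ℤ}
    (h : (((M, N), k), j) ∉ Set.range durfeeCoords) :
    durfeeTerm x M k * durfeeTerm x (k + N) j = 0 := by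
  rcases lt_or_ge k 0 with hk | hk
  · simp [durfeeTerm, invQPoch_of_neg x hk]
  rcases lt_or_ge (k + M) 0 with hl | hl
  · simp [durfeeTerm, invQPoch_of_neg x hl]
  rcases lt_or_ge j 0 with hj | hj
  · simp [durfeeTerm, invQPoch_of_neg x hj]
  rcases lt_or_ge (j + (k + N)) 0 with hi | hi
  · simp [durfeeTerm, invQPoch_of_neg x hi]
  refine absurd ⟨((j + (k + N)).toNat, j.toNat, k.toNat, (k + M).toNat), ?_⟩ h
  simp only [durfeeCoords, Int.toNat_of_nonneg, hi, hj, hk, hl, Prod.mk.injEq]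
  lia

lemma hexThetaTerm_mul_durfeeTerm_mul_durfeeTerm (hx₀ : x ≠ 0) (i j k l : ℕ) :
    hexThetaTerm x u (l - k, i - j - k) * durfeeTerm x (l - k) k *
      durfeeTerm x (k + (i - j - k)) j = quadrupleTerm x u (i, j, k, l) := by
  have exponent : x ^ (((l : ℤ) - k) ^ 2 - (l - k) * (i - j - k) + (i - j - k) ^ 2) *
      x ^ ((k : ℤ) * l) * x ^ ((j : ℤ) * i) =
      x ^ ((i : ℤ) ^ 2 + j ^ 2 + k ^ 2 + l ^ 2 - i * j - i * k - i * l + j * k + j * l) := by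
    rw [← zpow_add₀ hx₀, ← zpow_add₀ hx₀]
    ring_nf
  rw [quadrupleTerm, ← exponent, hexThetaTerm, durfeeTerm, durfeeTerm, add_sub_cancel,
    show (j : ℤ) + (k + (i - j - k)) = i by ring]
  simp only [invQPoch_natCast]
  ring

theorem hasSum_quadrupleTerm (hx₀ : x ≠ 0) (hx : ‖x‖ < 1) (hu : u ≠ 0) :
    HasSum (quadrupleTerm x u)
      ((jacobiProduct (x ^ 3) u * jacobiProduct x u +
        jacobiProduct (x ^ 3) (x ^ 3 * u) * jacobiProduct x (u / x) * x) *
          (qPochInf x x)⁻¹ * (qPochInf x x)⁻¹) := by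
  obtain ⟨K, hK⟩ := exists_tsum_norm_durfeeTerm_le hx
  have durfee := hasSum_durfeeTerm hx₀ hx
  have theta := hasSum_hexThetaTerm hx₀ hx hu
  have fibre_k := hasSum_prod_mul_of_tsum_norm_le theta theta.summable.norm
    (fun p ↦ (durfee p.1).summable.norm) (fun p ↦ hK p.1) (fun p ↦ durfee p.1)
  have fibre_j := hasSum_prod_mul_of_tsum_norm_le fibre_k fibre_k.summable.norm
    (fun p ↦ (durfee (p.2 + p.1.2)).summable.norm) (fun p ↦ hK (p.2 + p.1.2))
    (fun p ↦ durfee (p.2 + p.1.2))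
  refine ((durfeeCoords_injective.hasSum_iff fun p hp ↦ ?_).2 fibre_j).congr_fun fun p ↦ ?_
  · rw [mul_assoc, durfeeTerm_mul_durfeeTerm_of_notMem_range hp, mul_zero]
  · exact (hexThetaTerm_mul_durfeeTerm_mul_durfeeTerm hx₀ p.1 p.2.1 p.2.2.1 p.2.2.2).symm

end QuadrupleSeries

theorem stmt_10 (q : ℂ) (h0 : 0 < ‖q‖) (h1 : ‖q‖ < 1) (u : ℂ) (hu : u ≠ 0) :
    (∑' p : ℕ × ℕ × ℕ × ℕ,
      (fun (i j k l : ℕ) =>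
        u ^ (((i:ℤ) - (j:ℤ) - (k:ℤ)) : ℤ) * q ^ ((2*(i:ℤ)^2 + 2*(j:ℤ)^2 + 2*(k:ℤ)^2 + 2*(l:ℤ)^2 - 2*(i:ℤ)*(j:ℤ) - 2*(i:ℤ)*(k:ℤ) - 2*(i:ℤ)*(l:ℤ) + 2*(j:ℤ)*(k:ℤ) + 2*(j:ℤ)*(l:ℤ)) : ℤ) /
          (qPoch (q ^ 2) (q ^ 2) i * qPoch (q ^ 2) (q ^ 2) j * qPoch (q ^ 2) (q ^ 2) k * qPoch (q ^ 2) (q ^ 2) l))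
        p.1 p.2.1 p.2.2.1 p.2.2.2)
    = (1 / (J q 2)^2) *
      ((qPochInf (-q^2*u) (q^4) * qPochInf (-q^2/u) (q^4) * qPochInf (q^4) (q^4)) *
        (qPochInf (-q^6*u) (q^12) * qPochInf (-q^6/u) (q^12) * qPochInf (q^12) (q^12))
      + q^2 * (qPochInf (-u) (q^4) * qPochInf (-q^4/u) (q^4) * qPochInf (q^4) (q^4)) *
        (qPochInf (-q^12*u) (q^12) * qPochInf (-1/u) (q^12) * qPochInf (q^12) (q^12))) := by
  have hq₀ : q ≠ 0 := norm_pos_iff.1 h0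
  have quadruple := hasSum_quadrupleTerm (pow_ne_zero 2 hq₀) (norm_sq_lt_one h1) hu
  have even₁ : jacobiProduct (q ^ 2) u =
      qPochInf (-q^2*u) (q^4) * qPochInf (-q^2/u) (q^4) * qPochInf (q^4) (q^4) := by
    rw [jacobiProduct, ← pow_mul, neg_mul, neg_div]
  have even₃ : jacobiProduct ((q ^ 2) ^ 3) u =
      qPochInf (-q^6*u) (q^12) * qPochInf (-q^6/u) (q^12) * qPochInf (q^12) (q^12) := by
    rw [jacobiProduct, ← pow_mul, ← pow_mul, neg_mul, neg_div]
  have odd₁ : jacobiProduct (q ^ 2) (u / q ^ 2) =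
      qPochInf (-u) (q^4) * qPochInf (-q^4/u) (q^4) * qPochInf (q^4) (q^4) := by
    rw [jacobiProduct, mul_div_cancel₀ u (pow_ne_zero 2 hq₀), div_div_eq_mul_div, ← sq, ← pow_mul,
      neg_div]
  have odd₃ : jacobiProduct ((q ^ 2) ^ 3) ((q ^ 2) ^ 3 * u) =
      qPochInf (-q^12*u) (q^12) * qPochInf (-1/u) (q^12) * qPochInf (q^12) (q^12) := by
    rw [jacobiProduct, ← mul_assoc, ← sq, div_mul_cancel_left₀ (by positivity), ← pow_mul,
      ← pow_mul, neg_mul, neg_div, one_div]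
  rw [even₁, even₃, odd₁, odd₃] at quadruple
  refine (tsum_congr fun p ↦ ?_).trans (quadruple.tsum_eq.trans ?_)
  · rw [quadrupleTerm, ← zpow_ofNat q 2, ← zpow_mul]
    ring_nf
  · rw [J]
    ring
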